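/- The Riemann-invariant map W : 𝒰 → ℝ⁴ defined by W(f, b, g, q) = (b/f, fb, q/g, (fb + gq)/(gq)^{1/4}) is injective on 𝒰. -/

import Mathlib

/-- The state space `𝒰` of the reduced two-phase thin-film system. -/
def stateSpace : Set (Fin 4 → ℝ) :=
  {U | 0 < U 0 ∧ 0 < U 1 ∧ 0 < U 2 ∧ 0 < U 3 ∧ U 0 * U 1 < U 2 * U 3}

/-- The Riemann-invariant map `W(f,b,g,q) = (b/f, fb, q/g, (fb+gq)/(gq)^{1/4})`. -/
noncomputable def riemannMap (U : Fin 4 → ℝ) : Fin 4 → ℝ :=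
  ![U 1 / U 0,
    U 0 * U 1,
    U 3 / U 2,
    (U 0 * U 1 + U 2 * U 3) / (U 2 * U 3) ^ ((1:ℝ)/4)]

/-!
The first two components of `W` determine `(f, b)`, since `f² = fb / (b/f)`, and in the same way
`q/g` together with `s = gq` determines `(g, q)`. It remains to recover `s` from the last component
`(p + s) / s^{1/4}`, where `p = fb` is already known. For `0 < a < 1`, Bernoulli's inequality
`x ^ a < 1 + a (x - 1)` at the ratio `x > 1` of two arguments shows that `s ↦ (p + s) / s ^ a` is
strictly increasing where `a (p + s) ≤ s`, which is where its derivative is nonnegative. For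
`a = 1/4` this region is `p ≤ 3 s`, which contains the states with `p < s`.
-/

theorem eq_and_eq_of_div_eq_div_of_mul_eq_mul {K : Type*} [Field K] [LinearOrder K]
    [IsStrictOrderedRing K] {x y x' y' : K} (hx : 0 < x) (hy : y ≠ 0) (hx' : 0 < x')
    (hdiv : y / x = y' / x') (hmul : x * y = x' * y') : x = x' ∧ y = y' := by
  have hsq : x ^ 2 = x' ^ 2 := by
    refine mul_right_cancel₀ (div_ne_zero hy hx.ne') ?_
    calc x ^ 2 * (y / x) = x * y := by field_simp
      _ = x' * y' := hmul
      _ = x' ^ 2 * (y' / x') := by field_simp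
      _ = x' ^ 2 * (y / x) := by rw [hdiv]
  obtain rfl : x = x' := (pow_left_inj₀ hx.le hx'.le two_ne_zero).mp hsq
  exact ⟨rfl, mul_left_cancel₀ hx.ne' hmul⟩

section RpowQuotient

variable {a p s x : ℝ}

theorem add_mul_rpow_lt_add_mul (ha₀ : 0 < a) (ha₁ : a < 1) (hs : 0 < s)
    (hps : a * (p + s) ≤ s) (hx : 1 < x) : (p + s) * x ^ a < p + s * x := by
  have one_lt_rpow : 1 < x ^ a := Real.one_lt_rpow hx ha₀
  have bernoulli : x ^ a < 1 + a * (x - 1) := by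
    simpa only [add_sub_cancel] using
      rpow_one_add_lt_one_add_mul_self (s := x - 1) (by linarith) (sub_ne_zero.mpr hx.ne')
        ha₀ ha₁
  have scaled : a * (p * (x ^ a - 1)) < a * (s * (x - x ^ a)) :=
    calc a * (p * (x ^ a - 1)) = a * p * (x ^ a - 1) := by ring
      _ ≤ (1 - a) * s * (x ^ a - 1) :=
        mul_le_mul_of_nonneg_right (by linarith) (sub_nonneg.mpr one_lt_rpow.le)
      _ = s * ((x ^ a - 1) - a * (x ^ a - 1)) := by ring
      _ < s * (a * (x - 1) - a * (x ^ a - 1)) := by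
        gcongr
        linarith
      _ = a * (s * (x - x ^ a)) := by ring
  linarith [lt_of_mul_lt_mul_left scaled ha₀.le]

theorem strictMonoOn_add_div_rpow (ha₀ : 0 < a) (ha₁ : a < 1) :
    StrictMonoOn (fun s : ℝ ↦ (p + s) / s ^ a) {s | 0 < s ∧ a * (p + s) ≤ s} := by
  rintro s ⟨hs, hps⟩ r ⟨hr, -⟩ hsr
  have hrs : 1 < r / s := (one_lt_div hs).mpr hsr
  calc (p + s) / s ^ a = (p + s) * (r / s) ^ a / r ^ a := by
        rw [Real.div_rpow hr.le hs.le]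
        field_simp
    _ < (p + s * (r / s)) / r ^ a := by
        gcongr
        exact add_mul_rpow_lt_add_mul ha₀ ha₁ hs hps hrs
    _ = (p + r) / r ^ a := by rw [mul_div_cancel₀ r hs.ne']

end RpowQuotient

theorem riemannMap_injOn_general :
    Set.InjOn riemannMap
      {U | 0 < U 0 ∧ U 1 ≠ 0 ∧ 0 < U 2 ∧ 0 < U 3 ∧ U 0 * U 1 ≤ 3 * (U 2 * U 3)} := by
  rintro U ⟨hf, hb, hg, hq, hU⟩ V ⟨hf', -, hg', hq', hV⟩ hUV
  have hfb : U 0 * U 1 = V 0 * V 1 := congrFun hUV 1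
  have hlast : (U 0 * U 1 + U 2 * U 3) / (U 2 * U 3) ^ ((1 : ℝ) / 4) =
      (U 0 * U 1 + V 2 * V 3) / (V 2 * V 3) ^ ((1 : ℝ) / 4) :=
    (congrFun hUV 3).trans (by rw [hfb]; rfl)
  have hgq : U 2 * U 3 = V 2 * V 3 :=
    (strictMonoOn_add_div_rpow (by norm_num) (by norm_num)).injOn
      ⟨mul_pos hg hq, by linarith⟩ ⟨mul_pos hg' hq', by linarith⟩ hlast
  obtain ⟨h₀, h₁⟩ := eq_and_eq_of_div_eq_div_of_mul_eq_mul hf hb hf' (congrFun hUV 0) hfb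
  obtain ⟨h₂, h₃⟩ := eq_and_eq_of_div_eq_div_of_mul_eq_mul hg hq.ne' hg' (congrFun hUV 2) hgq
  funext i
  fin_cases i <;> assumption

/-- The Riemann-invariant map is injective on the state space `𝒰`. -/
theorem riemannMap_injOn : Set.InjOn riemannMap stateSpace := by
  refine riemannMap_injOn_general.mono ?_
  rintro U ⟨hf, hb, hg, hq, hlt⟩
  exact ⟨hf, hb.ne', hg, hq, by linarith [mul_pos hg hq]⟩
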